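/- For every integer e ≥ 9 and each i ∈ {2,3}, there exists a finite group G of order 3^{19+e} whose abelianization is isomorphic to (ZMod (3^e)) × (ZMod 3), which admits an automorphism σ such that for every g ∈ G the image of σ(g) in the abelianization equals the inverse of the image of g, whose third derived subgroup is trivial and whose second derived subgroup G'' is a nontrivial abelian group isomorphic to (ZMod 27) × (ZMod 27) × (ZMod 9) × (ZMod 3) × (ZMod 3) × (ZMod 3), and whose quotient G/G'' is isomorphic to a metabelian σ-group of order 3^{8+e} generated by x, y satisfying w^3 = 1, y^3 = s₃ s₄^2, s₂^3 = s₄ t₄^2 w^{i-1}, s₃^3 = s₅, t₃^3 = s₅^2 w^{2(i-1)}, [x^3, y] = s₄ t₄ s₅^2 w^{2(i-1)}, [x^3, s₂] = s₅, t₅ = s₅ w^{i-1}. -/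

import Mathlib

/-- The commutator `[a,b] = a⁻¹ * b⁻¹ * a * b`. -/
def comm' {G : Type*} [Group G] (a b : G) : G := a⁻¹ * b⁻¹ * a * b

/-- `s₂ = [y,x]` and `s_j = [s_(j-1), x]` for `j ≥ 3`. -/
def sgen {G : Type*} [Group G] (x y : G) : ℕ → G
  | 0 => 1
  | 1 => 1
  | 2 => comm' y x
  | (n + 3) => comm' (sgen x y (n + 2)) x

/-- `t_j = [s_(j-1), y]` for `j ≥ 3`. -/
def tgenD {G : Type*} [Group G] (x y : G) (j : ℕ) : G := comm' (sgen x y (j - 1)) y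

/-- `t₂ = [y,x]` and `t_j = [t_(j-1), y]` for `j ≥ 3`. -/
def tgenB {G : Type*} [Group G] (x y : G) : ℕ → G
  | 0 => 1
  | 1 => 1
  | 2 => comm' y x
  | (n + 3) => comm' (tgenB x y (n + 2)) y

/-- A σ-group: a group admitting an automorphism acting as inversion on the
abelianization. -/
def IsSigmaGroup (G : Type*) [Group G] : Prop :=
  ∃ σ : G ≃* G, ∀ g : G, Abelianization.of (σ g) = (Abelianization.of g)⁻¹

/-- A group is metabelian if its commutator subgroup is abelian, i.e. the second
derived subgroup is trivial. -/
def IsMetabelian (G : Type*) [Group G] : Prop := derivedSeries G 2 = ⊥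

/-!
The group is a tower of cyclic extensions. An abelian group of order `3 ^ 13` is extended by
`t₄, s₄, t₃, s₃, s₂` to a group `N` of order `3 ^ 18`, then by `y` to a group `K` with central
element `z`, and finally by `x` with `x ^ 3 ^ e = z ^ c`. A cyclic extension of `H` by `t` exists as
soon as the prospective action of `t` on `H` and the prospective value of `t ^ n` satisfy two
conditions, and these are identities between homomorphisms, hence can be evaluated on generators
of `H`. For the last step they hold for all `e ≥ 4` at once, because `x` acts on `K` with order
dividing `81`; the integer `c` is chosen with `z ^ (c * (i - 1)) = z`.

The commutator subgroup of the group is `N`, and that of `N` is abelian: explicit commutators fill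
the kernel of a homomorphism from `N` onto an abelian group of order `3 ^ 7`. The σ-automorphism
inverts `x` and `y`. Relations in the metabelianization hold between elements of `K`, where they
only need to be checked modulo that kernel.
-/

namespace SchurSigma

open Multiplicative (ofAdd toAdd)

section Commutator

variable {G H : Type*} [Group G] [Group H]

theorem map_comm' (f : G →* H) (a b : G) : f (comm' a b) = comm' (f a) (f b) := by
  simp only [comm', map_mul, map_inv]

theorem comm'_mem {S : Subgroup G} {a b : G} (ha : a ∈ S) (hb : b ∈ S) : comm' a b ∈ S :=
  mul_mem (mul_mem (mul_mem (inv_mem ha) (inv_mem hb)) ha) hb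

theorem comm'_mem_commutator (a b : G) : comm' a b ∈ commutator G := by
  rw [← Abelianization.ker_of, MonoidHom.mem_ker, map_comm', comm', mul_assoc,
    ← mul_inv, inv_mul_cancel]

end Commutator

section DerivedSeries

variable {G H N : Type*} [Group G] [Group H] [Group N]

theorem derivedSeries_succ_eq_map {ι : N →* G} (h : commutator G = ι.range) (n : ℕ) :
    derivedSeries G (n + 1) = (derivedSeries N n).map ι := by
  induction n with
  | zero => rw [derivedSeries_one, derivedSeries_zero, h, MonoidHom.range_eq_map]
  | succ n ih => rw [derivedSeries_succ, ih, derivedSeries_succ, Subgroup.map_commutator]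

theorem derivedSeries_one_eq_bot (A : Type*) [CommGroup A] : derivedSeries A 1 = ⊥ := by
  rw [derivedSeries_one, commutator_eq_bot_iff_center_eq_top, CommGroup.center_eq_top]

theorem isMetabelian_quotient_derivedSeries_two : IsMetabelian (G ⧸ derivedSeries G 2) := by
  rw [IsMetabelian, ← map_derivedSeries_eq (QuotientGroup.mk'_surjective _),
    Subgroup.map_eq_bot_iff, QuotientGroup.ker_mk']

theorem isSigmaGroup_quotient (h : IsSigmaGroup G) (K : Subgroup G) [K.Characteristic] :
    IsSigmaGroup (G ⧸ K) := by
  obtain ⟨σ, hσ⟩ := h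
  refine ⟨QuotientGroup.congr K K σ (Subgroup.characteristic_iff_map_eq.1 inferInstance σ), ?_⟩
  rintro ⟨g⟩
  exact congrArg (Abelianization.map (QuotientGroup.mk' K)) (hσ g)

theorem abelianization_of_apply_eq_inv {σ : G ≃* G} {S : Set G} (hS : Subgroup.closure S = ⊤)
    (hσ : ∀ s ∈ S, σ s = s⁻¹) (g : G) : Abelianization.of (σ g) = (Abelianization.of g)⁻¹ :=
  DFunLike.congr_fun (MonoidHom.eq_of_eqOn_dense hS
    (f := Abelianization.of.comp σ.toMonoidHom) (g := invMonoidHom.comp Abelianization.of)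
    fun s hs => by simp [hσ s hs]) g

/-- The abelianization of `G`, computed from a surjection whose kernel is the commutator
subgroup. -/
noncomputable def abelianizationEquiv (π : G →* H) (hπ : Function.Surjective π)
    (hker : commutator G = π.ker) : Abelianization G ≃* H :=
  (QuotientGroup.quotientMulEquivOfEq hker).trans
    (QuotientGroup.quotientKerEquivOfSurjective π hπ)

end DerivedSeries

section Generators

/-- A list of generators of a group, chosen once and for all, so that identities between
homomorphisms can be checked by evaluation. -/
class HasGenerators (H : Type*) [Group H] where
  gens : List H
  eq_top_of_gens_mem (S : Subgroup H) : (∀ g ∈ gens, g ∈ S) → S = ⊤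

namespace HasGenerators

section Hom

variable {H Q : Type*} [Group H] [HasGenerators H] [Group Q] {a b : H →* Q}

theorem hom_ext (h : gens.map a = gens.map b) : a = b :=
  MonoidHom.eq_of_eqOn_top fun _ _ =>
    (eq_top_of_gens_mem (a.eqLocus b) (List.map_inj_left.1 h)).ge (Subgroup.mem_top _)

theorem hom_mul_eq_mul_hom {q : Q} (h : gens.map (fun g => a g * q) = gens.map fun g => q * b g)
    (x : H) : a x * q = q * b x := by
  have conj_eq : (MulAut.conj q⁻¹).toMonoidHom.comp a = b :=
    hom_ext <| List.map_inj_left.2 fun g hg => by simp [mul_assoc, List.map_inj_left.1 h g hg]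
  simp [← conj_eq, mul_assoc]

theorem range_le {S : Subgroup Q} {l : List Q} (h : gens.map a = l) (hl : ∀ q ∈ l, q ∈ S) :
    a.range ≤ S := by
  subst h
  rw [MonoidHom.range_eq_map, Subgroup.map_le_iff_le_comap]
  exact (eq_top_of_gens_mem (S.comap a) fun g hg => hl _ (List.mem_map_of_mem hg)).ge

theorem surjective_of_map_eq_gens {G : Type*} [Group G] {f : G →* H} {l : List G}
    (h : l.map f = gens) : Function.Surjective f :=
  MonoidHom.range_eq_top.1 <| eq_top_of_gens_mem _ <| by
    simpa only [← h, List.forall_mem_map] using fun g _ => ⟨g, rfl⟩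

end Hom

instance (n : ℕ) : HasGenerators (Multiplicative (ZMod n)) where
  gens := [ofAdd 1]
  eq_top_of_gens_mem S hS := by
    refine (Subgroup.eq_top_iff' S).2 fun x => ?_
    obtain ⟨k, hk⟩ := ZMod.intCast_surjective (toAdd x)
    have hx : x = ofAdd 1 ^ k := by rw [← ofAdd_zsmul, zsmul_one, hk, ofAdd_toAdd]
    rw [hx]
    exact zpow_mem (hS _ List.mem_cons_self) k

instance (A C : Type*) [AddGroup A] [AddGroup C]
    [HasGenerators (Multiplicative A)] [HasGenerators (Multiplicative C)] :
    HasGenerators (Multiplicative (A × C)) where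
  gens := gens.map (AddMonoidHom.toMultiplicative (AddMonoidHom.inl A C)) ++
    gens.map (AddMonoidHom.toMultiplicative (AddMonoidHom.inr A C))
  eq_top_of_gens_mem S hS := by
    have left_le := eq_top_of_gens_mem (S.comap (AddMonoidHom.toMultiplicative (.inl A C)))
      fun g hg => hS _ (List.mem_append_left _ (List.mem_map_of_mem hg))
    have right_le := eq_top_of_gens_mem (S.comap (AddMonoidHom.toMultiplicative (.inr A C)))
      fun g hg => hS _ (List.mem_append_right _ (List.mem_map_of_mem hg))
    refine (Subgroup.eq_top_iff' S).2 fun x => ?_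
    have hx : x = AddMonoidHom.toMultiplicative (.inl A C) (ofAdd (toAdd x).1) *
        AddMonoidHom.toMultiplicative (.inr A C) (ofAdd (toAdd x).2) :=
      toAdd.injective <| by simp
    rw [hx]
    exact mul_mem (left_le.ge (Subgroup.mem_top _)) (right_le.ge (Subgroup.mem_top _))

end HasGenerators

end Generators

/-- The data defining an extension of `H` by a cyclic group of order `n`: an adjoined element `t`
acts on `H` by `t⁻¹ * h * t = twist h` and satisfies `t ^ n = power`. -/
structure CyclicExtensionData (H : Type*) [Group H] (n : ℕ) where
  twist : H →* H
  power : H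
  twist_power : twist power = power
  power_mul_iterate_twist : ∀ h, power * twist^[n] h = h * power

/-- The cyclic extension with the given data; `⟨a, h⟩` stands for `t ^ a * h`. -/
@[ext]
structure CyclicExtension {H : Type*} [Group H] {n : ℕ} (d : CyclicExtensionData H n) where
  exponent : Fin n
  base : H

namespace CyclicExtension

variable {H : Type*} [Group H] {n : ℕ} {d : CyclicExtensionData H n}

instance [DecidableEq H] : DecidableEq (CyclicExtension d) := fun p q =>
  decidable_of_iff (p.exponent = q.exponent ∧ p.base = q.base) CyclicExtension.ext_iff.symm

variable (d) in
/-- The pairs `(exponent, base)` as a product type. -/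
def equivProd : CyclicExtension d ≃ Fin n × H where
  toFun p := (p.exponent, p.base)
  invFun p := ⟨p.1, p.2⟩

instance [Finite H] : Finite (CyclicExtension d) := Finite.of_equiv _ (equivProd d).symm

theorem card : Nat.card (CyclicExtension d) = n * Nat.card H := by
  rw [Nat.card_congr (equivProd d), Nat.card_prod, Nat.card_fin]

theorem iterate_twist_power_pow (k j : ℕ) : d.twist^[k] (d.power ^ j) = d.power ^ j := by
  rw [iterate_map_pow, Function.iterate_fixed d.twist_power]

theorem power_pow_mul_iterate_twist (j r : ℕ) (h : H) :
    d.power ^ j * d.twist^[n * j + r] h = d.twist^[r] h * d.power ^ j := by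
  induction j generalizing r with
  | zero => simp
  | succ j ih =>
    rw [show n * (j + 1) + r = n * j + (n + r) by ring, pow_succ', mul_assoc, ih, ← mul_assoc,
      Function.iterate_add_apply, d.power_mul_iterate_twist, mul_assoc]

variable [NeZero n]

variable (d) in
/-- The element `t ^ m * h` in normal form. The case distinction keeps evaluation cheap. -/
def normalForm (m : ℕ) (h : H) : CyclicExtension d :=
  ⟨Fin.ofNat n m, if m < n then h else d.power ^ (m / n) * h⟩

theorem normalForm_exponent (m : ℕ) (h : H) : ((normalForm d m h).exponent : ℕ) = m % n := rfl

theorem normalForm_base (m : ℕ) (h : H) : (normalForm d m h).base = d.power ^ (m / n) * h := by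
  rw [normalForm]
  split_ifs with hm
  · rw [Nat.div_eq_of_lt hm, pow_zero, one_mul]
  · rfl

theorem normalForm_exponent_base (p : CyclicExtension d) : normalForm d p.exponent p.base = p := by
  ext
  · exact Nat.mod_eq_of_lt p.exponent.2
  · rw [normalForm_base, Nat.div_eq_of_lt p.exponent.2, pow_zero, one_mul]

theorem normalForm_add_mul (m q : ℕ) (h : H) :
    normalForm d (m + n * q) h = normalForm d m (d.power ^ q * h) := by
  ext
  · simp [normalForm_exponent]
  · rw [normalForm_base, normalForm_base, Nat.add_mul_div_left _ _ (NeZero.pos n), pow_add,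
      mul_assoc]

theorem normalForm_card (h : H) : normalForm d n h = normalForm d 0 (d.power * h) := by
  simpa using normalForm_add_mul (d := d) 0 1 h

instance : Mul (CyclicExtension d) where
  mul p q := normalForm d (p.exponent + q.exponent) (d.twist^[q.exponent] p.base * q.base)

instance : One (CyclicExtension d) where
  one := ⟨0, 1⟩

instance : Inv (CyclicExtension d) where
  inv p := normalForm d (n - p.exponent) (d.twist^[n - p.exponent] p.base⁻¹ * d.power⁻¹)

theorem normalForm_zero (h : H) : normalForm d 0 h = ⟨0, h⟩ := normalForm_exponent_base ⟨0, h⟩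

theorem normalForm_mul_normalForm (m k : ℕ) (g h : H) :
    normalForm d m g * normalForm d k h = normalForm d (m + k) (d.twist^[k] g * h) := by
  have exponents : m + k = m % n + k % n + n * (m / n + k / n) := by
    linarith [Nat.mod_add_div m n, Nat.mod_add_div k n]
  have twist_past_power := power_pow_mul_iterate_twist (d := d) (k / n) (k % n) g
  rw [Nat.div_add_mod] at twist_past_power
  change normalForm d (m % n + k % n)
    (d.twist^[k % n] (normalForm d m g).base * (normalForm d k h).base) = _
  rw [normalForm_base, normalForm_base, iterate_map_mul, iterate_twist_power_pow]
  conv_rhs => rw [exponents, normalForm_add_mul, pow_add]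
  congr 1
  rw [mul_assoc, ← mul_assoc _ _ h, ← twist_past_power]
  simp only [mul_assoc]

instance : Group (CyclicExtension d) := Group.ofLeftAxioms
  (fun a b c => by
    rw [← normalForm_exponent_base a, ← normalForm_exponent_base b, ← normalForm_exponent_base c]
    simp only [normalForm_mul_normalForm, iterate_map_mul, ← Function.iterate_add_apply, mul_assoc,
      add_assoc, add_comm (b.exponent : ℕ)])
  (fun a => by
    change ⟨0, 1⟩ * a = a
    rw [← normalForm_zero, ← normalForm_exponent_base a, normalForm_mul_normalForm,
      iterate_map_one, zero_add, one_mul])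
  (fun a => by
    have exponent_le : (a.exponent : ℕ) ≤ n := a.exponent.2.le
    have twist_past_power := d.power_mul_iterate_twist a.base⁻¹
    change normalForm d _ _ * a = ⟨0, 1⟩
    nth_rw 4 [← normalForm_exponent_base a]
    rw [normalForm_mul_normalForm, Nat.sub_add_cancel exponent_le, normalForm_card,
      normalForm_zero, iterate_map_mul, ← Function.iterate_add_apply,
      Nat.add_sub_cancel' exponent_le, iterate_map_inv d.twist _ d.power,
      Function.iterate_fixed d.twist_power, ← mul_assoc, ← mul_assoc, twist_past_power,
      mul_inv_cancel_right, inv_mul_cancel])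

variable (d) in
/-- The inclusion of the base group into a cyclic extension. -/
def incl : H →* CyclicExtension d where
  toFun h := ⟨0, h⟩
  map_one' := rfl
  map_mul' g h := by
    rw [← normalForm_zero, ← normalForm_zero, ← normalForm_zero, normalForm_mul_normalForm]
    rfl

theorem incl_eq_normalForm (h : H) : normalForm d 0 h = incl d h := normalForm_zero h

variable (d) in
/-- The adjoined element `t` of a cyclic extension. -/
def gen : CyclicExtension d := normalForm d 1 1

theorem incl_injective : Function.Injective (incl d) := fun _ _ h => congrArg base h

theorem gen_pow (m : ℕ) : gen d ^ m = normalForm d m 1 := by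
  induction m with
  | zero => rw [pow_zero, normalForm_zero]; rfl
  | succ m ih => rw [pow_succ, ih, gen, normalForm_mul_normalForm, iterate_map_one, mul_one]

theorem normalForm_eq (m : ℕ) (h : H) : normalForm d m h = gen d ^ m * incl d h := by
  rw [gen_pow, ← incl_eq_normalForm, normalForm_mul_normalForm]
  simp

theorem gen_pow_exponent_mul_incl_base (p : CyclicExtension d) :
    gen d ^ (p.exponent : ℕ) * incl d p.base = p := by
  rw [← normalForm_eq, normalForm_exponent_base]

theorem gen_pow_card : gen d ^ n = incl d d.power := by
  rw [gen_pow, normalForm_card, incl_eq_normalForm, mul_one]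

theorem incl_mul_gen (h : H) : incl d h * gen d = gen d * incl d (d.twist h) := by
  rw [← incl_eq_normalForm, ← incl_eq_normalForm, gen, normalForm_mul_normalForm,
    normalForm_mul_normalForm]
  simp

theorem incl_mul_gen_pow (h : H) (m : ℕ) :
    incl d h * gen d ^ m = gen d ^ m * incl d (d.twist^[m] h) := by
  rw [← incl_eq_normalForm, gen_pow, normalForm_mul_normalForm, ← gen_pow, zero_add, mul_one,
    normalForm_eq]

theorem comm'_incl_gen (h : H) : comm' (incl d h) (gen d) = incl d (h⁻¹ * d.twist h) := by
  rw [comm', mul_assoc, incl_mul_gen, map_mul, map_inv]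
  group

theorem comm'_gen_pow_incl (m : ℕ) (h : H) :
    comm' (gen d ^ m) (incl d h) = incl d ((d.twist^[m] h)⁻¹ * h) := by
  rw [comm', mul_assoc (_ ^ m)⁻¹, ← map_inv, incl_mul_gen_pow, inv_mul_cancel_left, ← map_mul,
    iterate_map_inv]

section Lift

variable {Q : Type*} [Group Q]

/-- The homomorphism out of a cyclic extension sending `t` to `q` and restricting to `g`. -/
def lift (q : Q) (g : H →* Q) (pow_eq : q ^ n = g d.power)
    (mul_eq : ∀ h, g h * q = q * g (d.twist h)) : CyclicExtension d →* Q :=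
  MonoidHom.mk' (fun p => q ^ (p.exponent : ℕ) * g p.base) (by
    have mul_pow_eq (k : ℕ) (h : H) : g h * q ^ k = q ^ k * g (d.twist^[k] h) := by
      induction k generalizing h with
      | zero => simp
      | succ k ih =>
        rw [pow_succ', ← mul_assoc, mul_eq, mul_assoc, ih, Function.iterate_succ_apply, mul_assoc]
    have eval_normalForm (m : ℕ) (h : H) :
        q ^ ((normalForm d m h).exponent : ℕ) * g (normalForm d m h).base = q ^ m * g h := by
      rw [normalForm_exponent, normalForm_base, map_mul, map_pow, ← pow_eq, ← pow_mul, ← mul_assoc,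
        ← pow_add, Nat.mod_add_div]
    intro a b
    refine (eval_normalForm _ _).trans ?_
    rw [map_mul, pow_add, mul_assoc, ← mul_assoc _ _ (g b.base), ← mul_pow_eq]
    simp only [mul_assoc])

variable {q : Q} {g : H →* Q} {pow_eq : q ^ n = g d.power}
    {mul_eq : ∀ h, g h * q = q * g (d.twist h)}

theorem lift_apply (p : CyclicExtension d) :
    lift q g pow_eq mul_eq p = q ^ (p.exponent : ℕ) * g p.base := rfl

theorem lift_incl (h : H) : lift q g pow_eq mul_eq (incl d h) = g h := by
  rw [lift_apply]
  exact (congrArg (· * g h) (pow_zero q)).trans (one_mul _)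

theorem lift_gen : lift q g pow_eq mul_eq (gen d) = q := by
  rw [lift_apply, gen, normalForm_exponent, normalForm_base, mul_one, map_pow, ← pow_eq, ← pow_mul,
    ← pow_add, Nat.mod_add_div, pow_one]

end Lift

section Exponent

variable (d) in
/-- The homomorphism `t ^ a * h ↦ a`. -/
def exponentHom : CyclicExtension d →* Multiplicative (ZMod n) :=
  lift (ofAdd 1) 1 (by simp [← ofAdd_nsmul]) (by simp)

theorem exponentHom_apply (p : CyclicExtension d) :
    exponentHom d p = ofAdd ((p.exponent : ℕ) : ZMod n) := by
  simp [exponentHom, lift_apply, ← ofAdd_nsmul]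

theorem exponentHom_surjective : Function.Surjective (exponentHom d) := fun a =>
  ⟨⟨Fin.ofNat n (toAdd a).val, 1⟩, by simp [exponentHom_apply]⟩

theorem ker_exponentHom : (exponentHom d).ker = (incl d).range := by
  ext p
  rw [MonoidHom.mem_ker]
  refine ⟨fun hp => ⟨p.base, ?_⟩, ?_⟩
  · rw [exponentHom_apply, ofAdd_eq_one, ZMod.natCast_eq_zero_iff] at hp
    have exponent_eq : (p.exponent : ℕ) = 0 := Nat.eq_zero_of_dvd_of_lt hp p.exponent.2
    conv_rhs => rw [← gen_pow_exponent_mul_incl_base p, exponent_eq, pow_zero, one_mul]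
  · rintro ⟨h, rfl⟩
    rw [exponentHom, lift_incl, MonoidHom.one_apply]

variable {A : Type*} [Group A] (χ : H →* A) (power_eq : χ d.power = 1)
    (twist_eq : ∀ h, χ (d.twist h) = χ h)

/-- The homomorphism `t ^ a * h ↦ (a, χ h)` for a twist-invariant homomorphism `χ` on the base. -/
def exponentProd : CyclicExtension d →* Multiplicative (ZMod n) × A :=
  (exponentHom d).prod (lift 1 χ (by simp [power_eq]) (by simp [twist_eq]))

theorem ker_exponentProd : (exponentProd χ power_eq twist_eq).ker = χ.ker.map (incl d) := by
  rw [exponentProd, MonoidHom.ker_prod, ker_exponentHom]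
  ext p
  refine ⟨?_, ?_⟩
  · rintro ⟨⟨h, rfl⟩, hh⟩
    exact ⟨h, (lift_incl h).symm.trans hh, rfl⟩
  · rintro ⟨h, hh, rfl⟩
    exact ⟨⟨h, rfl⟩, (lift_incl h).trans hh⟩

theorem exponentProd_surjective (hχ : Function.Surjective χ) :
    Function.Surjective (exponentProd χ power_eq twist_eq) := by
  rintro ⟨a, b⟩
  obtain ⟨h, rfl⟩ := hχ b
  refine ⟨⟨Fin.ofNat n (toAdd a).val, h⟩, ?_⟩
  simp [exponentProd, exponentHom_apply, lift_apply]

end Exponent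

section InvertGen

variable (τ : H →* H) (involutive : Function.Involutive τ) (power_eq : τ d.power = d.power⁻¹)
    (twist_eq : ∀ h, d.twist (τ (d.twist h)) = τ h)

/-- The automorphism of a cyclic extension inverting `t` and restricting to an involution `τ` of
the base. -/
def invertGen : CyclicExtension d ≃* CyclicExtension d :=
  let σ : CyclicExtension d →* CyclicExtension d := lift (gen d)⁻¹ ((incl d).comp τ)
    (by simp [power_eq, gen_pow_card])
    (fun h => by
      rw [← inv_mul_eq_iff_eq_mul, inv_inv, ← mul_assoc, mul_inv_eq_iff_eq_mul]
      simp only [MonoidHom.comp_apply, incl_mul_gen, twist_eq])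
  have σ_σ : σ.comp σ = .id _ := MonoidHom.ext fun p => by
    rw [← gen_pow_exponent_mul_incl_base p]
    simp [σ, lift_gen, lift_incl, involutive _]
  σ.toMulEquiv σ σ_σ σ_σ

theorem invertGen_gen : invertGen τ involutive power_eq twist_eq (gen d) = (gen d)⁻¹ := by
  rw [invertGen, MonoidHom.toMulEquiv_apply, lift_gen]

theorem invertGen_incl (h : H) :
    invertGen τ involutive power_eq twist_eq (incl d h) = incl d (τ h) := by
  rw [invertGen, MonoidHom.toMulEquiv_apply, lift_incl, MonoidHom.comp_apply]

end InvertGen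

section Generators

open HasGenerators

variable [HasGenerators H]

instance : HasGenerators (CyclicExtension d) where
  gens := gen d :: gens.map (incl d)
  eq_top_of_gens_mem S hS := by
    have base_le := eq_top_of_gens_mem (S.comap (incl d)) fun g hg =>
      hS _ (List.mem_cons_of_mem _ (List.mem_map_of_mem hg))
    refine (Subgroup.eq_top_iff' S).2 fun p => ?_
    rw [← gen_pow_exponent_mul_incl_base p]
    exact mul_mem (pow_mem (hS _ List.mem_cons_self) _) (base_le.ge (Subgroup.mem_top _))

/-- `CyclicExtension.lift` with its conditions checked by evaluation on generators. -/
def liftOfGens {Q : Type*} [Group Q] (q : Q) (g : H →* Q)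
    (h : q ^ n = g d.power ∧ gens.map (fun x => g x * q) = gens.map fun x => q * g (d.twist x) := by
      decide +kernel) :
    CyclicExtension d →* Q :=
  lift q g h.1 (hom_mul_eq_mul_hom (b := g.comp d.twist) h.2)

/-- The endomorphism of a cyclic extension sending `t` to `q` and restricting to an endomorphism
`f` of the base. -/
def extendEnd (q : CyclicExtension d) (f : H →* H)
    (h : q ^ n = incl d (f d.power) ∧
        gens.map (fun x => incl d (f x) * q) = gens.map fun x => q * incl d (f (d.twist x)) := by
      decide +kernel) :
    CyclicExtension d →* CyclicExtension d :=
  liftOfGens q ((incl d).comp f) h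

end Generators

end CyclicExtension

/-- Data of a cyclic extension with the condition on `n`-fold twisting checked by evaluation on
generators. -/
def CyclicExtensionData.ofGens {H : Type*} [Group H] [HasGenerators H] {n : ℕ} (f : H →* H) (w : H)
    (h : f w = w ∧ HasGenerators.gens.map (fun g => g * w) =
        HasGenerators.gens.map fun g => w * f^[n] g := by decide +kernel) :
    CyclicExtensionData H n where
  twist := f
  power := w
  twist_power := h.1
  power_mul_iterate_twist x := (HasGenerators.hom_mul_eq_mul_hom (a := .id H)
    (b := .mk' f^[n] (iterate_map_mul f n)) h.2 x).symm

/-- The homomorphism out of a cyclic group sending its generator to `v`. -/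
def zmodLift {Q : Type*} [Group Q] {n : ℕ} [NeZero n] (v : Q) (h : v ^ n = 1 := by decide +kernel) :
    Multiplicative (ZMod n) →* Q where
  toFun x := v ^ (toAdd x).val
  map_one' := by simp
  map_mul' x y := by
    rw [toAdd_mul, ZMod.val_add, ← pow_add, ← pow_mod_orderOf,
      Nat.mod_mod_of_dvd _ (orderOf_dvd_of_pow_eq_one h), pow_mod_orderOf]

/-- The homomorphism out of `ZMod n × A` sending the generator of the first factor to `v` and
restricting to `g` on the second. -/
def prodLift {Q A : Type*} [CommGroup Q] [AddGroup A] {n : ℕ} [NeZero n] (v : Q)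
    (g : Multiplicative A →* Q) (h : v ^ n = 1 := by decide +kernel) :
    Multiplicative (ZMod n × A) →* Q :=
  ((zmodLift v h).coprod g).comp (MulEquiv.prodMultiplicative (ZMod n) A).toMonoidHom

open CyclicExtension HasGenerators

section Tower

-- The tables list the images of the generators in the order of the normal form.

instance {A : Type*} [DecidableEq A] : DecidableEq (Multiplicative A) :=
  inferInstanceAs (DecidableEq A)

/-- The abelian group `⟨[s₃, s₂], [t₃, s₂], [s₄, s₂], s₅ * [t₃, s₂] ^ 2, t₅ * [s₃, s₂], [t₃, s₃]⟩`
at the bottom of the tower, with coordinates along these generators. -/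
abbrev Bottom := Multiplicative (ZMod 27 × ZMod 27 × ZMod 9 × ZMod 9 × ZMod 9 × ZMod 3)

-- The named instances at four levels keep the unfolding in kernel evaluation short.
instance : DecidableEq Bottom := inferInstance

/-- The element of `Bottom` with the given coordinates. -/
def b (a₁ a₂ : ZMod 27) (a₃ a₄ a₅ : ZMod 9) (a₆ : ZMod 3) : Bottom := ofAdd (a₁, a₂, a₃, a₄, a₅, a₆)

/-- The adjunction of `t₄` to `Bottom`. -/
def dataT₄ : CyclicExtensionData Bottom 3 := .ofGens
  (prodLift (b 19 18 0 0 0 0) <| prodLift (b 9 19 0 0 0 0) <| prodLift (b 0 0 1 0 0 0) <|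
    prodLift (b 0 0 0 1 0 0) <| prodLift (b 0 9 0 0 1 0) <| zmodLift (b 0 0 0 0 0 1))
  (b 21 18 5 0 6 1)

/-- The adjunction of `s₄` to `⟨t₄, Bottom⟩`. -/
def dataS₄ : CyclicExtensionData (CyclicExtension dataT₄) 3 := .ofGens
  (extendEnd ⟨1, b 18 0 3 0 0 0⟩ <|
    prodLift (b 10 18 0 0 0 0) <| prodLift (b 9 10 0 0 0 0) <| prodLift (b 0 0 1 0 0 0) <|
    prodLift (b 9 0 0 1 0 0) <| prodLift (b 0 0 0 0 1 0) <| zmodLift (b 0 0 0 0 0 1))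
  ⟨0, b 12 18 2 6 0 2⟩

/-- The adjunction of `t₃` to `⟨s₄, t₄, Bottom⟩`. -/
def dataT₃ : CyclicExtensionData (CyclicExtension dataS₄) 3 := .ofGens
  (extendEnd ⟨1, 0, b 18 0 6 6 0 0⟩ <| extendEnd ⟨1, b 0 12 6 6 0 0⟩ <|
    prodLift (b 1 18 6 0 0 0) <| prodLift (b 0 10 3 0 0 0) <| prodLift (b 0 9 1 0 0 0) <|
    prodLift (b 0 18 0 1 0 0) <| prodLift (b 0 0 0 0 1 0) <| zmodLift (b 0 18 0 0 0 1))
  ⟨0, 0, b 15 15 8 3 2 2⟩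

/-- The adjunction of `s₃` to `⟨t₃, s₄, t₄, Bottom⟩`. -/
def dataS₃ : CyclicExtensionData (CyclicExtension dataT₃) 3 := .ofGens
  (extendEnd ⟨1, 0, 0, b 0 0 0 0 0 1⟩ <| extendEnd ⟨1, 0, b 15 9 3 0 6 0⟩ <|
    extendEnd ⟨1, b 0 18 3 0 6 0⟩ <|
    prodLift (b 10 18 3 0 0 0) <| prodLift (b 18 10 6 0 0 0) <| prodLift (b 18 0 1 0 0 0) <|
    prodLift (b 0 0 0 1 0 0) <| prodLift (b 18 0 0 0 1 0) <| zmodLift (b 18 0 0 0 0 1))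
  ⟨0, 0, 0, b 0 0 8 1 0 1⟩

instance : DecidableEq (CyclicExtension dataS₃) := inferInstance

/-- The adjunction of `s₂` to `⟨s₃, t₃, s₄, t₄, Bottom⟩`. -/
def dataS₂ : CyclicExtensionData (CyclicExtension dataS₃) 3 := .ofGens
  (extendEnd ⟨1, 0, 0, 0, b 1 0 0 0 0 0⟩ <| extendEnd ⟨1, 0, 0, b 0 1 0 0 0 0⟩ <|
    extendEnd ⟨1, 0, b 0 0 1 0 0 0⟩ <| extendEnd ⟨1, b 15 15 1 0 0 0⟩ <|
    prodLift (b 25 9 0 6 6 0) <| prodLift (b 18 25 0 3 3 0) <| prodLift (b 18 9 7 0 0 0) <|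
    prodLift (b 3 18 6 1 0 0) <| prodLift (b 9 24 3 0 1 0) <| zmodLift (b 18 18 0 0 0 1))
  ⟨0, 0, 1, 2, b 15 0 0 2 4 0⟩

/-- The group that becomes the commutator subgroup; `⟨a₂, a₃, b₃, a₄, b₄, h⟩` stands for
`s₂ ^ a₂ * s₃ ^ a₃ * t₃ ^ b₃ * s₄ ^ a₄ * t₄ ^ b₄ * h`. -/
abbrev N := CyclicExtension dataS₂

instance : DecidableEq N := inferInstance

/-- The adjunction of `y` to `N`. -/
def dataY : CyclicExtensionData N 3 := .ofGens
  (extendEnd ⟨1, 0, 1, 0, 0, b 0 0 0 0 0 0⟩ <| extendEnd ⟨1, 0, 0, 0, b 14 24 4 6 6 0⟩ <|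
    extendEnd ⟨1, 0, 1, b 0 0 0 0 0 0⟩ <| extendEnd ⟨1, 0, b 5 24 4 6 6 0⟩ <|
    extendEnd ⟨1, b 26 0 0 0 1 0⟩ <|
    prodLift (b 22 0 6 3 3 2) <| prodLift (b 24 10 1 6 0 0) <| prodLift (b 12 18 7 0 3 0) <|
    prodLift (b 9 18 0 1 6 0) <| prodLift (b 12 18 7 0 4 2) <| zmodLift (b 18 18 0 0 6 1))
  ⟨0, 1, 0, 2, 0, b 6 0 4 3 0 1⟩

/-- The extension of `N` by `y`. -/
abbrev K := CyclicExtension dataY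

instance : DecidableEq K := inferInstance

/-- The action of `x` on `K`. -/
def α : K →* K :=
  extendEnd ⟨1, 1, 0, 0, 0, 0, b 0 0 0 0 0 0⟩ <| extendEnd ⟨1, 1, 0, 0, 0, b 0 0 0 0 0 0⟩ <|
    extendEnd ⟨1, 0, 1, 0, b 0 0 0 0 0 0⟩ <| extendEnd ⟨1, 0, 0, b 0 25 7 0 0 1⟩ <|
    extendEnd ⟨1, 0, b 0 25 0 1 0 0⟩ <| extendEnd ⟨1, b 24 22 8 0 3 0⟩ <|
    prodLift (b 25 18 7 0 6 0) <| prodLift (b 18 25 0 3 3 1) <| prodLift (b 18 15 7 3 0 0) <|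
    prodLift (b 3 15 8 7 0 2) <| prodLift (b 9 0 3 3 1 0) <| zmodLift (b 18 18 0 3 0 1)

/-- The restriction to `K` of the automorphism inverting `x` and `y`. -/
def τ : K →* K :=
  extendEnd ⟨2, 0, 2, 0, 1, 0, b 12 0 1 8 3 2⟩ <| extendEnd ⟨1, 2, 2, 1, 1, b 13 11 0 4 0 1⟩ <|
    extendEnd ⟨2, 0, 2, 0, b 6 15 4 5 6 2⟩ <| extendEnd ⟨2, 0, 2, b 12 15 0 3 7 2⟩ <|
    extendEnd ⟨1, 0, b 3 24 0 6 3 0⟩ <| extendEnd ⟨1, b 6 15 6 3 3 0⟩ <|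
    prodLift (b 2 0 2 6 0 2) <| prodLift (b 12 26 2 0 6 1) <| prodLift (b 3 0 7 3 3 0) <|
    prodLift (b 0 0 3 2 6 2) <| prodLift (b 9 0 0 3 5 2) <| zmodLift (b 9 0 0 3 6 1)

end Tower

section Elements

/-- The inclusion of `Bottom` into `N`. -/
def bottomToN : Bottom →* N :=
  (incl dataS₂).comp <| (incl dataS₃).comp <| (incl dataT₃).comp <| (incl dataS₄).comp <|
    incl dataT₄

/-- The generator `s₂` of `N`. -/
def s₂ : N := gen dataS₂

/-- The generator `s₃` of `N`. -/
def s₃ : N := incl dataS₂ (gen dataS₃)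

/-- The generator `t₃` of `N`. -/
def t₃ : N := incl dataS₂ (incl dataS₃ (gen dataT₃))

/-- The generator `s₄` of `N`. -/
def s₄ : N := incl dataS₂ (incl dataS₃ (incl dataT₃ (gen dataS₄)))

/-- The generator `t₄` of `N`. -/
def t₄ : N := incl dataS₂ (incl dataS₃ (incl dataT₃ (incl dataS₄ (gen dataT₄))))

/-- The element `s₅ = [s₄, x]` of `N`. -/
def s₅ : N := bottomToN (b 0 25 0 1 0 0)

/-- The element `t₅ = [t₄, y]` of `N`. -/
def t₅ : N := bottomToN (b 26 0 0 0 1 0)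

/-- The inclusion of `N` into `K`. -/
abbrev ofN : N →* K := incl dataY

/-- The generator `y` of `K`. -/
def y : K := gen dataY

/-- The central element of `K` whose powers are the possible values of `x ^ 3 ^ e`. -/
def z : K := ofN (bottomToN (b 11 2 5 2 4 0))

end Elements

section CommutatorOfN

/-- The homomorphism from `N` onto its abelianization. -/
def ρ : N →* Multiplicative (ZMod 9 × ZMod 9 × ZMod 9 × ZMod 3) :=
  liftOfGens (ofAdd (1, 0, 0, 0)) <| liftOfGens (ofAdd (0, 1, 0, 0)) <|
    liftOfGens (ofAdd (0, 0, 1, 0)) <| liftOfGens (ofAdd (3, 3, 3, 1)) <|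
    liftOfGens (ofAdd (0, 0, 0, 1)) <| prodLift 1 <| prodLift 1 <| prodLift 1 <|
    prodLift (ofAdd (0, 3, 0, 0)) <| prodLift (ofAdd (0, 0, 6, 0)) <| zmodLift 1

theorem ρ_surjective : Function.Surjective ρ :=
  surjective_of_map_eq_gens (l := [s₂, s₃, t₃, t₄]) (by decide +kernel)

/-- The isomorphism type of the commutator subgroup of `N`. -/
abbrev DerivedN := Multiplicative (ZMod 27 × ZMod 27 × ZMod 9 × ZMod 3 × ZMod 3 × ZMod 3)

/-- The embedding of `ZMod 3` in `ZMod 9`. -/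
def triple : ZMod 3 →+ ZMod 9 where
  toFun a := 3 * a.val
  map_zero' := rfl
  map_add' := by decide

/-- The embedding of `DerivedN` in `N`. -/
def ofDerivedN : DerivedN →* N :=
  bottomToN.comp <| AddMonoidHom.toMultiplicative <| .prodMap (.id _) <| .prodMap (.id _) <|
    .prodMap (.id _) <| .prodMap triple <| .prodMap triple (.id _)

theorem ofDerivedN_injective : Function.Injective ofDerivedN := by
  have triple_injective : Function.Injective triple := by decide
  have bottomToN_injective : Function.Injective bottomToN :=
    incl_injective.comp <| incl_injective.comp <| incl_injective.comp <| incl_injective.comp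
      incl_injective
  exact bottomToN_injective.comp <| Function.injective_id.prodMap <|
    Function.injective_id.prodMap <| Function.injective_id.prodMap <|
    triple_injective.prodMap <| triple_injective.prodMap Function.injective_id

theorem range_ofDerivedN_le : ofDerivedN.range ≤ commutator N := by
  refine range_le (l := [comm' s₃ s₂, comm' t₃ s₂, comm' s₄ s₂,
    (comm' s₄ t₃ * comm' s₃ s₂ ^ 9 * comm' s₄ s₂ ^ 3) ^ 2,
    (comm' s₄ s₃ * comm' s₃ s₂ ^ 12 * comm' t₃ s₂ ^ 18 * comm' s₄ s₂ ^ 6) ^ 2, comm' t₃ s₃])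
    (by decide +kernel) ?_
  have mem := comm'_mem_commutator (G := N)
  simp only [List.forall_mem_cons]
  refine ⟨mem _ _, mem _ _, mem _ _, pow_mem ?_ 2, pow_mem ?_ 2, mem _ _, List.forall_mem_nil _⟩
  · exact mul_mem (mul_mem (mem _ _) (pow_mem (mem _ _) 9)) (pow_mem (mem _ _) 3)
  · exact mul_mem (mul_mem (mul_mem (mem _ _) (pow_mem (mem _ _) 12)) (pow_mem (mem _ _) 18))
      (pow_mem (mem _ _) 6)

theorem card_N : Nat.card N = 3 ^ 18 := by
  simp only [CyclicExtension.card, Nat.card_eq_fintype_card, Fintype.card_multiplicative,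
    Fintype.card_prod, ZMod.card]
  norm_num

theorem card_derivedN : Nat.card DerivedN = 3 ^ 11 := by
  simp only [Nat.card_eq_fintype_card, Fintype.card_multiplicative, Fintype.card_prod, ZMod.card]
  norm_num

theorem card_ker_ρ : Nat.card ρ.ker = 3 ^ 11 := by
  have card_mul := ρ.ker.card_mul_index
  rw [Subgroup.index_ker, MonoidHom.range_eq_top.2 ρ_surjective, Subgroup.card_top, card_N,
    Nat.card_eq_fintype_card (α := Multiplicative _)] at card_mul
  simp only [Fintype.card_multiplicative, Fintype.card_prod, ZMod.card] at card_mul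
  lia

theorem range_ofDerivedN : ofDerivedN.range = ρ.ker := by
  refine Subgroup.eq_of_le_of_card_ge
    (range_ofDerivedN_le.trans (Abelianization.commutator_subset_ker ρ)) ?_
  rw [card_ker_ρ, ← card_derivedN]
  exact (Nat.card_congr (ofDerivedN.ofInjective ofDerivedN_injective).toEquiv).le

theorem commutator_N : commutator N = ofDerivedN.range :=
  le_antisymm ((Abelianization.commutator_subset_ker ρ).trans range_ofDerivedN.ge)
    range_ofDerivedN_le

end CommutatorOfN

section ActionOnK

theorem s₂_eq : ofN s₂ = y⁻¹ * α y := by decide +kernel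

theorem s₃_eq : ofN s₃ = (ofN s₂)⁻¹ * α (ofN s₂) := by decide +kernel

theorem s₄_eq : ofN s₄ = (ofN s₃)⁻¹ * α (ofN s₃) := by decide +kernel

theorem s₅_eq : ofN s₅ = (ofN s₄)⁻¹ * α (ofN s₄) := by decide +kernel

theorem t₃_eq : ofN t₃ = comm' (ofN s₂) y := by decide +kernel

theorem t₄_eq : ofN t₄ = comm' (ofN t₃) y := by decide +kernel

theorem t₅_eq : ofN t₅ = comm' (ofN t₄) y := by decide +kernel

theorem range_ofN_le {S : Subgroup K} (s₂_mem : ofN s₂ ∈ S) (hα : ∀ k ∈ S, k⁻¹ * α k ∈ S)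
    (hy : ∀ k ∈ S, comm' k y ∈ S) : ofN.range ≤ S := by
  have s₃_mem : ofN s₃ ∈ S := s₃_eq ▸ hα _ s₂_mem
  have s₄_mem : ofN s₄ ∈ S := s₄_eq ▸ hα _ s₃_mem
  have s₅_mem : ofN s₅ ∈ S := s₅_eq ▸ hα _ s₄_mem
  have t₃_mem : ofN t₃ ∈ S := t₃_eq ▸ hy _ s₂_mem
  have t₄_mem : ofN t₄ ∈ S := t₄_eq ▸ hy _ t₃_mem
  have t₅_mem : ofN t₅ ∈ S := t₅_eq ▸ hy _ t₄_mem
  refine range_le (l := [s₂, s₃, t₃, s₄, t₄, comm' s₃ s₂, comm' t₃ s₂, comm' s₄ s₂,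
    s₅ * comm' t₃ s₂ ^ 2, t₅ * comm' s₃ s₂, comm' t₃ s₃].map ofN) (by decide +kernel) ?_
  simp only [List.forall_mem_map, List.forall_mem_cons, map_mul, map_pow, map_comm']
  exact ⟨s₂_mem, s₃_mem, t₃_mem, s₄_mem, t₄_mem, comm'_mem s₃_mem s₂_mem,
    comm'_mem t₃_mem s₂_mem, comm'_mem s₄_mem s₂_mem,
    mul_mem s₅_mem (pow_mem (comm'_mem t₃_mem s₂_mem) 2),
    mul_mem t₅_mem (comm'_mem s₃_mem s₂_mem), comm'_mem t₃_mem s₃_mem, List.forall_mem_nil _⟩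

theorem eq_top_of_y_mem {S : Subgroup K} (y_mem : y ∈ S) (hα : ∀ k ∈ S, α k ∈ S) : S = ⊤ := by
  have ofN_mem : ofN.range ≤ S := range_ofN_le (s₂_eq ▸ mul_mem (inv_mem y_mem) (hα _ y_mem))
    (fun k hk => mul_mem (inv_mem hk) (hα k hk)) fun k hk => comm'_mem hk y_mem
  refine (Subgroup.eq_top_iff' S).2 fun k => ?_
  rw [← gen_pow_exponent_mul_incl_base k]
  exact mul_mem (pow_mem y_mem _) (ofN_mem ⟨_, rfl⟩)

theorem iterate_α_eq_self {m : ℕ} (h : Function.IsPeriodicPt α m y) (k : K) : α^[m] k = k := by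
  have fixed_eq_top : (MonoidHom.mk' α^[m] (iterate_map_mul α m)).eqLocus (.id K) = ⊤ := by
    refine eq_top_of_y_mem h fun k hk => ?_
    change α^[m] (α k) = α k
    rw [← Function.iterate_succ_apply, Function.iterate_succ_apply']
    exact congrArg α hk
  exact fixed_eq_top.ge (Subgroup.mem_top k)

theorem isPeriodicPt_α : Function.IsPeriodicPt α (3 ^ 4) y :=
  show α^[81] y = y by decide +kernel

theorem mul_z (k : K) : k * z = z * k :=
  hom_mul_eq_mul_hom (a := .id K) (b := .id K) (by decide +kernel) k

theorem z_pow_twenty_seven : z ^ 27 = 1 := by decide +kernel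

theorem α_z : α z = z := by decide +kernel

theorem τ_z : τ z = z⁻¹ := by decide +kernel

theorem τ_y : τ y = y⁻¹ := by decide +kernel

theorem τ_involutive : Function.Involutive τ := by
  have τ_comp_τ : τ.comp τ = .id K := hom_ext (by decide +kernel)
  intro k
  rw [← MonoidHom.comp_apply, τ_comp_τ, MonoidHom.id_apply]

theorem α_τ_α (k : K) : α (τ (α k)) = τ k := by
  have α_comp_τ_comp_α : (α.comp τ).comp α = τ := hom_ext (by decide +kernel)
  rw [← MonoidHom.comp_apply, ← MonoidHom.comp_apply, α_comp_τ_comp_α]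

theorem exponentHom_α (k : K) : exponentHom dataY (α k) = exponentHom dataY k := by
  have exponentHom_comp_α : (exponentHom dataY).comp α = exponentHom dataY :=
    hom_ext (by decide +kernel)
  rw [← MonoidHom.comp_apply, exponentHom_comp_α]

theorem exponentHom_z : exponentHom dataY z = 1 := by decide +kernel

end ActionOnK

section SchurGroup

variable {e : ℕ} (he : 4 ≤ e) (c : ℕ)

/-- The adjunction of `x` to `K`, with `x ^ 3 ^ e = z ^ c`. -/
def dataX : CyclicExtensionData K (3 ^ e) where
  twist := α
  power := z ^ c
  twist_power := by rw [map_pow, α_z]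
  power_mul_iterate_twist k := by
    rw [iterate_α_eq_self (isPeriodicPt_α.trans_dvd (pow_dvd_pow 3 he)),
      (Commute.pow_right (mul_z k) c).eq]

/-- The Schur σ-group generated by `x` and `y` with `x ^ 3 ^ e = z ^ c`. -/
abbrev SchurGroup := CyclicExtension (dataX he c)

/-- The generator `x` of `SchurGroup he c`. -/
abbrev x : SchurGroup he c := gen (dataX he c)

/-- The inclusion of `K` into `SchurGroup he c`. -/
abbrev ofK : K →* SchurGroup he c := incl (dataX he c)

theorem dataX_twist : (dataX he c).twist = α := rfl

theorem dataX_power : (dataX he c).power = z ^ c := rfl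

theorem card_schurGroup : Nat.card (SchurGroup he c) = 3 ^ (19 + e) := by
  rw [CyclicExtension.card, CyclicExtension.card, card_N, ← pow_succ', ← pow_add, add_comm]

theorem closure_x_y : Subgroup.closure {x he c, ofK he c y} = ⊤ := by
  set S := Subgroup.closure {x he c, ofK he c y}
  have x_mem : x he c ∈ S := Subgroup.subset_closure (.inl rfl)
  have comap_eq_top : S.comap (ofK he c) = ⊤ := by
    refine eq_top_of_y_mem (Subgroup.subset_closure (.inr rfl)) fun k hk => ?_
    have ofK_α : ofK he c (α k) = (x he c)⁻¹ * (ofK he c k * x he c) :=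
      eq_inv_mul_of_mul_eq (incl_mul_gen k).symm
    rw [Subgroup.mem_comap, ofK_α]
    exact mul_mem (inv_mem x_mem) (mul_mem hk x_mem)
  refine (Subgroup.eq_top_iff' S).2 fun g => ?_
  rw [← gen_pow_exponent_mul_incl_base g]
  exact mul_mem (pow_mem x_mem _) (comap_eq_top.ge (Subgroup.mem_top _))

/-- The homomorphism sending an element to its exponents of `x` and `y`. -/
def exponents : SchurGroup he c →* Multiplicative (ZMod (3 ^ e)) × Multiplicative (ZMod 3) :=
  exponentProd (exponentHom dataY) (by rw [dataX_power, map_pow, exponentHom_z, one_pow])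
    fun k => by rw [dataX_twist, exponentHom_α]

theorem ker_exponents : (exponents he c).ker = ((ofK he c).comp ofN).range := by
  rw [exponents, ker_exponentProd, ker_exponentHom, MonoidHom.range_comp]

theorem commutator_schurGroup : commutator (SchurGroup he c) = ((ofK he c).comp ofN).range := by
  refine le_antisymm
    ((Abelianization.commutator_subset_ker (exponents he c)).trans (ker_exponents he c).le) ?_
  rw [MonoidHom.range_comp, Subgroup.map_le_iff_le_comap]
  have comm_x_mem (k : K) : k⁻¹ * α k ∈ (commutator (SchurGroup he c)).comap (ofK he c) := by
    rw [Subgroup.mem_comap, ← dataX_twist he c, ← comm'_incl_gen]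
    exact comm'_mem_commutator _ _
  refine range_ofN_le (s₂_eq ▸ comm_x_mem y) (fun k _ => comm_x_mem k) fun k _ => ?_
  rw [Subgroup.mem_comap, map_comm']
  exact comm'_mem_commutator _ _

/-- The abelianization of `SchurGroup he c`. -/
noncomputable def abelianizationSchurGroup :
    Abelianization (SchurGroup he c) ≃* Multiplicative (ZMod (3 ^ e) × ZMod 3) :=
  (abelianizationEquiv (exponents he c) (exponentProd_surjective _ _ _ exponentHom_surjective)
    ((commutator_schurGroup he c).trans (ker_exponents he c).symm)).trans
    (MulEquiv.prodMultiplicative _ _).symm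

/-- The embedding of `DerivedN` in `SchurGroup he c`. -/
def ofDerived : DerivedN →* SchurGroup he c := ((ofK he c).comp ofN).comp ofDerivedN

theorem ofDerived_injective : Function.Injective (ofDerived he c) :=
  (incl_injective.comp incl_injective).comp ofDerivedN_injective

theorem derivedSeries_two : derivedSeries (SchurGroup he c) 2 = (ofDerived he c).range := by
  rw [derivedSeries_succ_eq_map (commutator_schurGroup he c), derivedSeries_one, commutator_N,
    ← MonoidHom.range_comp, ofDerived]

/-- The second derived subgroup of `SchurGroup he c`. -/
noncomputable def derivedSeriesTwoEquiv : derivedSeries (SchurGroup he c) 2 ≃* DerivedN :=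
  (MulEquiv.subgroupCongr (derivedSeries_two he c)).trans
    (MonoidHom.ofInjective (ofDerived_injective he c)).symm

theorem derivedSeries_two_ne_bot : derivedSeries (SchurGroup he c) 2 ≠ ⊥ := by
  have derived_nontrivial := (derivedSeriesTwoEquiv he c).symm.injective.nontrivial
  exact (Subgroup.nontrivial_iff_ne_bot _).1 derived_nontrivial

theorem derivedSeries_three : derivedSeries (SchurGroup he c) 3 = ⊥ := by
  rw [derivedSeries_succ_eq_map (commutator_schurGroup he c),
    derivedSeries_succ_eq_map commutator_N, derivedSeries_one_eq_bot, Subgroup.map_bot,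
    Subgroup.map_bot]

theorem isSigmaGroup_schurGroup : IsSigmaGroup (SchurGroup he c) := by
  let σ : SchurGroup he c ≃* SchurGroup he c := invertGen τ τ_involutive
    (by rw [dataX_power, map_pow, τ_z, inv_pow]) fun k => by rw [dataX_twist, α_τ_α]
  have σ_x : σ (x he c) = (x he c)⁻¹ := by rw [invertGen_gen]
  have σ_y : σ (ofK he c y) = (ofK he c y)⁻¹ := by rw [invertGen_incl, τ_y, map_inv]
  exact ⟨σ, abelianization_of_apply_eq_inv (closure_x_y he c) <|
    Set.forall_mem_insert.2 ⟨σ_x, forall_eq.2 σ_y⟩⟩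

end SchurGroup

section Metabelianization

variable {e : ℕ} (he : 4 ≤ e) (c : ℕ)

/-- The quotient of `SchurGroup he c` by its second derived subgroup. -/
abbrev Metabelianization := SchurGroup he c ⧸ derivedSeries (SchurGroup he c) 2

/-- The projection of `SchurGroup he c` onto its metabelianization. -/
abbrev proj : SchurGroup he c →* Metabelianization he c := QuotientGroup.mk' _

/-- The image of `x` in the metabelianization. -/
def xBar : Metabelianization he c := proj he c (x he c)

/-- The homomorphism from `K` to the metabelianization. -/
def ofKBar : K →* Metabelianization he c := (proj he c).comp (ofK he c)

/-- The image of `y` in the metabelianization. -/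
def yBar : Metabelianization he c := ofKBar he c y

/-- The image of `z` in the metabelianization. -/
def zBar : Metabelianization he c := ofKBar he c z

theorem card_metabelianization : Nat.card (Metabelianization he c) = 3 ^ (8 + e) := by
  have card_mul := Subgroup.card_eq_card_quotient_mul_card_subgroup
    (derivedSeries (SchurGroup he c) 2)
  rw [card_schurGroup, Nat.card_congr (derivedSeriesTwoEquiv he c).toEquiv, card_derivedN,
    show 19 + e = 8 + e + 11 by ring, pow_add] at card_mul
  exact (Nat.eq_of_mul_eq_mul_right (by positivity) card_mul).symm

theorem closure_xBar_yBar : Subgroup.closure {xBar he c, yBar he c} = ⊤ := by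
  have image_eq := Set.image_pair (proj he c) (x he c) (ofK he c y)
  rw [xBar, yBar, ofKBar, MonoidHom.comp_apply, ← image_eq, ← MonoidHom.map_closure, closure_x_y,
    Subgroup.map_top_of_surjective _ (QuotientGroup.mk'_surjective _)]

theorem ofKBar_apply (k : K) : ofKBar he c k = proj he c (ofK he c k) := rfl

theorem exists_z_pow_eq {n : ℕ} (hn : ¬ 3 ∣ n) : ∃ c : ℕ, (z ^ n) ^ c = z :=
  have coprime_27 : n.Coprime (3 ^ 3) :=
    ((Nat.prime_three.coprime_iff_not_dvd.2 hn).symm).pow_right 3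
  exists_pow_eq_self_of_coprime <|
    coprime_27.coprime_dvd_right (orderOf_dvd_of_pow_eq_one z_pow_twenty_seven)

theorem xBar_pow : xBar he c ^ 3 ^ e = zBar he c ^ c := by
  rw [xBar, ← map_pow, gen_pow_card, dataX_power, zBar, ← map_pow, ofKBar_apply]

variable {c} in
theorem xBar_pow_pow {n : ℕ} (hc : (z ^ n) ^ c = z) : (xBar he c ^ 3 ^ e) ^ n = zBar he c := by
  rw [xBar_pow, pow_right_comm, zBar, ← map_pow, ← map_pow, hc]

theorem ofKBar_eq {k l : K} (h : (k⁻¹ * l).exponent = 0 ∧ ρ (k⁻¹ * l).base = 1) :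
    ofKBar he c k = ofKBar he c l := by
  obtain ⟨d, hd⟩ : (k⁻¹ * l).base ∈ ofDerivedN.range := range_ofDerivedN ▸ h.2
  have quotient_eq : ofN (ofDerivedN d) = k⁻¹ * l := by
    conv_rhs => rw [← gen_pow_exponent_mul_incl_base (k⁻¹ * l), h.1, ← hd]
    exact (one_mul _).symm
  refine QuotientGroup.eq.2 ?_
  rw [← map_inv, ← map_mul, derivedSeries_two, ← quotient_eq]
  exact ⟨d, rfl⟩

theorem comm'_ofKBar_xBar (k : K) :
    comm' (ofKBar he c k) (xBar he c) = ofKBar he c (k⁻¹ * α k) := by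
  rw [ofKBar_apply, ofKBar_apply, xBar, ← map_comm', comm'_incl_gen, dataX_twist]

theorem comm'_xBar_pow_ofKBar (m : ℕ) (k : K) :
    comm' (xBar he c ^ m) (ofKBar he c k) = ofKBar he c ((α^[m] k)⁻¹ * k) := by
  rw [ofKBar_apply, ofKBar_apply, xBar, ← map_pow, ← map_comm', comm'_gen_pow_incl, dataX_twist]

theorem sgen_two : sgen (xBar he c) (yBar he c) 2 = ofKBar he c (ofN s₂) := by
  rw [sgen, yBar, comm'_ofKBar_xBar, ← s₂_eq]

theorem sgen_three : sgen (xBar he c) (yBar he c) 3 = ofKBar he c (ofN s₃) := by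
  rw [sgen, sgen_two, comm'_ofKBar_xBar, ← s₃_eq]

theorem sgen_four : sgen (xBar he c) (yBar he c) 4 = ofKBar he c (ofN s₄) := by
  rw [sgen, sgen_three, comm'_ofKBar_xBar, ← s₄_eq]

theorem sgen_five : sgen (xBar he c) (yBar he c) 5 = ofKBar he c (ofN s₅) := by
  rw [sgen, sgen_four, comm'_ofKBar_xBar, ← s₅_eq]

theorem tgenB_three : tgenB (xBar he c) (yBar he c) 3 = ofKBar he c (ofN t₃) := by
  rw [tgenB, tgenB, yBar, comm'_ofKBar_xBar, ← s₂_eq, ← map_comm', ← t₃_eq]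

theorem tgenB_four : tgenB (xBar he c) (yBar he c) 4 = ofKBar he c (ofN t₄) := by
  rw [tgenB, tgenB_three, yBar, ← map_comm', ← t₄_eq]

theorem tgenB_five : tgenB (xBar he c) (yBar he c) 5 = ofKBar he c (ofN t₅) := by
  rw [tgenB, tgenB_four, yBar, ← map_comm', ← t₅_eq]

theorem zBar_pow_three : zBar he c ^ 3 = 1 := by
  rw [zBar, ← map_pow, ← map_one (ofKBar he c)]
  exact ofKBar_eq he c (by decide +kernel)

theorem xBar_pow_pow_three : (xBar he c ^ 3 ^ e) ^ 3 = 1 := by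
  rw [xBar_pow, pow_right_comm, zBar_pow_three, one_pow]

theorem yBar_pow_three : yBar he c ^ 3 =
    sgen (xBar he c) (yBar he c) 3 * sgen (xBar he c) (yBar he c) 4 ^ 2 := by
  rw [sgen_three, sgen_four, yBar]
  simp only [← map_pow (ofKBar he c), ← map_mul (ofKBar he c)]
  exact ofKBar_eq he c (by decide +kernel)

theorem sgen_two_pow_three : sgen (xBar he c) (yBar he c) 2 ^ 3 =
    sgen (xBar he c) (yBar he c) 4 * tgenB (xBar he c) (yBar he c) 4 ^ 2 * zBar he c := by
  simp only [sgen_two, sgen_four, tgenB_four, zBar, ← map_pow (ofKBar he c),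
    ← map_mul (ofKBar he c)]
  exact ofKBar_eq he c (by decide +kernel)

theorem sgen_three_pow_three :
    sgen (xBar he c) (yBar he c) 3 ^ 3 = sgen (xBar he c) (yBar he c) 5 := by
  rw [sgen_three, sgen_five, ← map_pow (ofKBar he c)]
  exact ofKBar_eq he c (by decide +kernel)

theorem tgenB_three_pow_three : tgenB (xBar he c) (yBar he c) 3 ^ 3 =
    sgen (xBar he c) (yBar he c) 5 ^ 2 * zBar he c ^ 2 := by
  simp only [tgenB_three, sgen_five, zBar, ← map_pow (ofKBar he c), ← map_mul (ofKBar he c)]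
  exact ofKBar_eq he c (by decide +kernel)

theorem comm'_xBar_pow_three_yBar : comm' (xBar he c ^ 3) (yBar he c) =
    sgen (xBar he c) (yBar he c) 4 * tgenB (xBar he c) (yBar he c) 4 *
      sgen (xBar he c) (yBar he c) 5 ^ 2 * zBar he c ^ 2 := by
  rw [sgen_four, tgenB_four, sgen_five, yBar, zBar, comm'_xBar_pow_ofKBar]
  simp only [← map_pow (ofKBar he c), ← map_mul (ofKBar he c)]
  exact ofKBar_eq he c (by decide +kernel)

theorem comm'_xBar_pow_three_sgen_two :
    comm' (xBar he c ^ 3) (sgen (xBar he c) (yBar he c) 2) = sgen (xBar he c) (yBar he c) 5 := by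
  rw [sgen_two, sgen_five, comm'_xBar_pow_ofKBar]
  exact ofKBar_eq he c (by decide +kernel)

theorem tgenB_five_eq : tgenB (xBar he c) (yBar he c) 5 =
    sgen (xBar he c) (yBar he c) 5 * zBar he c := by
  rw [tgenB_five, sgen_five, zBar, ← map_mul (ofKBar he c)]
  exact ofKBar_eq he c (by decide +kernel)

end Metabelianization

end SchurSigma

open SchurSigma in
theorem stmt18_general (e i : ℕ) (he : 4 ≤ e) (hi : ¬ 3 ∣ i - 1) :
    ∃ (G : Type) (_ : Group G) (_ : Finite G),
      Nat.card G = 3 ^ (19 + e) ∧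
      Nonempty (Abelianization G ≃* Multiplicative (ZMod (3 ^ e) × ZMod 3)) ∧
      (∃ σ : G ≃* G, ∀ g : G, Abelianization.of (σ g) = (Abelianization.of g)⁻¹) ∧
      derivedSeries G 3 = ⊥ ∧
      derivedSeries G 2 ≠ ⊥ ∧
      Nonempty ((derivedSeries G 2) ≃*
        Multiplicative (ZMod 27 × ZMod 27 × ZMod 9 × ZMod 3 × ZMod 3 × ZMod 3)) ∧
      ∃ (M : Type) (_ : Group M) (_ : Finite M) (x y : M),
        Subgroup.closure {x, y} = ⊤ ∧
        Nat.card M = 3 ^ (8 + e) ∧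
        IsMetabelian M ∧
        IsSigmaGroup M ∧
        (x ^ 3 ^ e) ^ 3 = 1 ∧
        y ^ 3 = sgen x y 3 * sgen x y 4 ^ 2 ∧
        sgen x y 2 ^ 3 = sgen x y 4 * tgenB x y 4 ^ 2 * (x ^ 3 ^ e) ^ (i - 1) ∧
        sgen x y 3 ^ 3 = sgen x y 5 ∧
        tgenB x y 3 ^ 3 = sgen x y 5 ^ 2 * (x ^ 3 ^ e) ^ (2 * (i - 1)) ∧
        comm' (x ^ 3) y = sgen x y 4 * tgenB x y 4 * sgen x y 5 ^ 2 * (x ^ 3 ^ e) ^ (2 * (i - 1)) ∧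
        comm' (x ^ 3) (sgen x y 2) = sgen x y 5 ∧
        tgenB x y 5 = sgen x y 5 * (x ^ 3 ^ e) ^ (i - 1) ∧
        ∃ φ : G →* M, Function.Surjective φ ∧ φ.ker = derivedSeries G 2 := by
  obtain ⟨c, hc⟩ := exists_z_pow_eq hi
  refine ⟨SchurGroup he c, inferInstance, inferInstance, card_schurGroup he c,
    ⟨abelianizationSchurGroup he c⟩, isSigmaGroup_schurGroup he c, derivedSeries_three he c,
    derivedSeries_two_ne_bot he c, ⟨derivedSeriesTwoEquiv he c⟩,
    Metabelianization he c, inferInstance, inferInstance, xBar he c, yBar he c,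
    closure_xBar_yBar he c, card_metabelianization he c, isMetabelian_quotient_derivedSeries_two,
    isSigmaGroup_quotient (isSigmaGroup_schurGroup he c) _, ?_⟩
  rw [mul_comm 2, pow_mul (xBar he c ^ 3 ^ e) (i - 1) 2, xBar_pow_pow he hc]
  exact ⟨xBar_pow_pow_three he c, yBar_pow_three he c, sgen_two_pow_three he c,
    sgen_three_pow_three he c, tgenB_three_pow_three he c, comm'_xBar_pow_three_yBar he c,
    comm'_xBar_pow_three_sgen_two he c, tgenB_five_eq he c,
    proj he c, QuotientGroup.mk'_surjective _, QuotientGroup.ker_mk' _⟩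

theorem stmt18 (e i : ℕ) (he : 9 ≤ e) (hi : i = 2 ∨ i = 3) :
    ∃ (G : Type) (_ : Group G) (_ : Finite G),
      Nat.card G = 3 ^ (19 + e) ∧
      Nonempty (Abelianization G ≃* Multiplicative (ZMod (3 ^ e) × ZMod 3)) ∧
      (∃ σ : G ≃* G, ∀ g : G, Abelianization.of (σ g) = (Abelianization.of g)⁻¹) ∧
      derivedSeries G 3 = ⊥ ∧
      derivedSeries G 2 ≠ ⊥ ∧
      Nonempty ((derivedSeries G 2) ≃*
        Multiplicative (ZMod 27 × ZMod 27 × ZMod 9 × ZMod 3 × ZMod 3 × ZMod 3)) ∧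
      ∃ (M : Type) (_ : Group M) (_ : Finite M) (x y : M),
        Subgroup.closure {x, y} = ⊤ ∧
        Nat.card M = 3 ^ (8 + e) ∧
        IsMetabelian M ∧
        IsSigmaGroup M ∧
        (x ^ 3 ^ e) ^ 3 = 1 ∧
        y ^ 3 = sgen x y 3 * sgen x y 4 ^ 2 ∧
        sgen x y 2 ^ 3 = sgen x y 4 * tgenB x y 4 ^ 2 * (x ^ 3 ^ e) ^ (i - 1) ∧
        sgen x y 3 ^ 3 = sgen x y 5 ∧
        tgenB x y 3 ^ 3 = sgen x y 5 ^ 2 * (x ^ 3 ^ e) ^ (2 * (i - 1)) ∧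
        comm' (x ^ 3) y = sgen x y 4 * tgenB x y 4 * sgen x y 5 ^ 2 * (x ^ 3 ^ e) ^ (2 * (i - 1)) ∧
        comm' (x ^ 3) (sgen x y 2) = sgen x y 5 ∧
        tgenB x y 5 = sgen x y 5 * (x ^ 3 ^ e) ^ (i - 1) ∧
        ∃ φ : G →* M, Function.Surjective φ ∧ φ.ker = derivedSeries G 2 :=
  stmt18_general e i (by lia) (by lia)
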